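/- Let G be a DAG containing no active cycle, let X, Y, Z ⊆ V be disjoint sets such that Y ∪ Z has local relationships and TRAILS(X,Y,Z) ≠ ∅, and let T be a minimal element of TRAILS(X,Y,Z) with respect to <_TRAIL, with converging nodes c_1, …, c_C and C ≥ 1. If c_1 ∈ Z and c_{i+1} → c_i ∈ E for all i = 1, …, C−1, then c_i ∈ Z for all i = 1, …, C. -/

import Mathlib

open scoped Classical

/-- `E` is the arc relation of a (finite) directed acyclic graph: there are no
directed cycles (hence also no loops and no pairs of opposite arcs). -/
def IsDAG {V : Type*} (E : V → V → Prop) : Prop :=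
  ∀ v : V, ¬ Relation.TransGen E v v

/-- `d` is a descendant of `v`: there is a (nonempty) directed path from `v` to `d`. -/
def Desc {V : Type*} (E : V → V → Prop) (v d : V) : Prop :=
  Relation.TransGen E v d

/-- A trail: a sequence of `len + 1` pairwise distinct nodes
`f 0, f 1, …, f len`, consecutive ones joined by an arc of `E`
in one of the two possible directions.  Its length is `len`. -/
structure Trail (V : Type*) (E : V → V → Prop) where
  len : ℕ
  f : ℕ → V
  arcs : ∀ i, i < len → E (f i) (f (i + 1)) ∨ E (f (i + 1)) (f i)
  inj : ∀ i, i ≤ len → ∀ j, j ≤ len → f i = f j → i = j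

namespace Trail

variable {V : Type*} {E : V → V → Prop}

/-- The trail has a converging connection at the interior index `i`:
`f (i-1) → f i ← f (i+1)`. -/
def ConvAt (T : Trail V E) (i : ℕ) : Prop :=
  0 < i ∧ i < T.len ∧ E (T.f (i - 1)) (T.f i) ∧ E (T.f (i + 1)) (T.f i)

/-- The trail is activated by `Z`: every interior converging node is in `Z` or has a
descendant in `Z`, and every interior non-converging node is not in `Z`. -/
def ActivatedBy (T : Trail V E) (Z : Set V) : Prop :=
  ∀ i, 0 < i → i < T.len →
    (T.ConvAt i → (T.f i ∈ Z ∨ ∃ d ∈ Z, Desc E (T.f i) d)) ∧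
    (¬ T.ConvAt i → T.f i ∉ Z)

/-- The trail has a chord: an arc of `E` between two non-consecutive nodes. -/
def HasChord (T : Trail V E) : Prop :=
  ∃ i j, i + 1 < j ∧ j ≤ T.len ∧ (E (T.f i) (T.f j) ∨ E (T.f j) (T.f i))

end Trail

/-- `E` contains an active cycle: a closed trail
`v ← x 0 ⇄ x 1 ⇄ ⋯ ⇄ x n ⇄ x (n+1) → v` (so `w = x 0` and `z = x (n+1)` are
distinct parents of `v`), with `n ≥ 1`, such that the trail
`x 0 ⇄ ⋯ ⇄ x (n+1)` has no converging connection and the closed trail has no chords. -/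
def HasActiveCycle {V : Type*} (E : V → V → Prop) : Prop :=
  ∃ (v : V) (n : ℕ) (x : ℕ → V),
    1 ≤ n ∧
    E (x 0) v ∧ E (x (n + 1)) v ∧
    (∀ i, i ≤ n + 1 → x i ≠ v) ∧
    (∀ i, i ≤ n + 1 → ∀ j, j ≤ n + 1 → x i = x j → i = j) ∧
    (∀ i, i < n + 1 → E (x i) (x (i + 1)) ∨ E (x (i + 1)) (x i)) ∧
    (∀ i, 0 < i → i < n + 1 → ¬ (E (x (i - 1)) (x i) ∧ E (x (i + 1)) (x i))) ∧
    (∀ i j, i + 1 < j → j ≤ n + 1 → ¬ (i = 0 ∧ j = n + 1) →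
      ¬ E (x i) (x j) ∧ ¬ E (x j) (x i)) ∧
    (∀ i, 1 ≤ i → i ≤ n → ¬ E v (x i) ∧ ¬ E (x i) v)

/-- A descendant path from `c` to `Z` with `n` intermediate nodes:
`c = d 0 → d 1 → ⋯ → d n → d (n+1) ∈ Z`, with `d j ∉ Z` for all `j ≤ n`. -/
def IsDescPath {V : Type*} (E : V → V → Prop) (Z : Set V) (c : V) (d : ℕ → V) (n : ℕ) :
    Prop :=
  d 0 = c ∧ d (n + 1) ∈ Z ∧ (∀ j, j ≤ n → d j ∉ Z) ∧ (∀ j, j ≤ n → E (d j) (d (j + 1)))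

/-- `n_Z(c)`: the least number of intermediate nodes of a descendant path from `c` to `Z`
(this is `0` when `c ∈ Z`, since then no descendant path exists and `sInf ∅ = 0`). -/
noncomputable def nZ {V : Type*} (E : V → V → Prop) (Z : Set V) (c : V) : ℕ :=
  sInf {n | ∃ d : ℕ → V, IsDescPath E Z c d n}

namespace Trail

variable {V : Type*} {E : V → V → Prop}

/-- The set of (interior) indices of `T` carrying a converging connection. -/
noncomputable def convIdx (T : Trail V E) : Finset ℕ :=
  (Finset.Ioo 0 T.len).filter fun i => T.ConvAt i

/-- The weight vector `(|{c₁,…,c_C} \ Z|, C, Σᵢ n_Z(i), Σᵢ n_t(i))` of a trail,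
whose lexicographic comparison induces the order `<_TRAIL`.  (The total length
of the subtrails, `Σᵢ n_t(i)`, equals `len - 1 - C`.) -/
noncomputable def weight (T : Trail V E) (Z : Set V) : ℕ × ℕ × ℕ × ℕ :=
  ((T.convIdx.filter fun i => T.f i ∉ Z).card,
   T.convIdx.card,
   ∑ i ∈ T.convIdx, nZ E Z (T.f i),
   T.len - 1 - T.convIdx.card)

end Trail

/-- Strict lexicographic order on `ℕ × ℕ × ℕ × ℕ`. -/
def LexLt4 (a b : ℕ × ℕ × ℕ × ℕ) : Prop :=
  a.1 < b.1 ∨ (a.1 = b.1 ∧ (a.2.1 < b.2.1 ∨ (a.2.1 = b.2.1 ∧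
    (a.2.2.1 < b.2.2.1 ∨ (a.2.2.1 = b.2.2.1 ∧ a.2.2.2 < b.2.2.2)))))

/-- `T ∈ TRAILS(X, Y, Z)`: `T` is a trail from a node of `X` to a node of `Y`
activated by `Z`. -/
def InTRAILS {V : Type*} {E : V → V → Prop} (T : Trail V E) (X Y Z : Set V) : Prop :=
  T.f 0 ∈ X ∧ T.f T.len ∈ Y ∧ T.ActivatedBy Z

/-- `T` is a minimal element of `TRAILS(X, Y, Z)` with respect to `<_TRAIL`. -/
def MinimalTrail {V : Type*} {E : V → V → Prop} (T : Trail V E) (X Y Z : Set V) : Prop :=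
  InTRAILS T X Y Z ∧
    ∀ T' : Trail V E, InTRAILS T' X Y Z → ¬ LexLt4 (T'.weight Z) (T.weight Z)

/-- `K` has local relationships: whenever two nodes of `K` are joined by a trail with
no converging connection all of whose interior nodes avoid `K`, they are adjacent. -/
def LocalRel {V : Type*} (E : V → V → Prop) (K : Set V) : Prop :=
  ∀ T : Trail V E, 1 ≤ T.len → T.f 0 ∈ K → T.f T.len ∈ K →
    (∀ i, 0 < i → i < T.len → T.f i ∉ K) →
    (∀ i, 0 < i → i < T.len → ¬ T.ConvAt i) →
    E (T.f 0) (T.f T.len) ∨ E (T.f T.len) (T.f 0)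

/-- `S` d-separates `A` and `B`: every trail from a node of `A` to a node of `B`
is blocked by (i.e. not activated by) `S`. -/
def DSep {V : Type*} (E : V → V → Prop) (A B S : Set V) : Prop :=
  ∀ T : Trail V E, T.f 0 ∈ A → T.f T.len ∈ B → ¬ T.ActivatedBy S

/-- `S` is connected: any two distinct nodes of `S` are joined by a trail all of
whose nodes lie in `S`. -/
def ConnectedIn {V : Type*} (E : V → V → Prop) (S : Set V) : Prop :=
  ∀ v1 ∈ S, ∀ v2 ∈ S, v1 ≠ v2 → ∃ T : Trail V E,
    T.f 0 = v1 ∧ T.f T.len = v2 ∧ ∀ i, i ≤ T.len → T.f i ∈ S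

/-!
If `b` is a converging node of `T` outside `Z` with an arc `b → a` to an earlier converging
node `a`, replace the part of `T` between `a` and `b` by this arc. The new trail still converges
at `a`, where the arc enters, but not at `b`, where it leaves; the other remaining nodes keep
their status. As `b ∉ Z`, the new trail is still activated by `Z`, and it has fewer converging
nodes outside `Z` than `T`. In a backward chain, every converging node but the first has such
an arc to its predecessor.
-/

theorem IsDAG.asymm {V : Type*} {E : V → V → Prop} (hE : IsDAG E) : Std.Asymm E :=
  ⟨fun u _ huv hvu => hE u (.tail (.single huv) hvu)⟩

theorem exists_last_lt {P : ℕ → Prop} {b c : ℕ} (hc : P c) (hcb : c < b) :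
    ∃ a < b, P a ∧ ∀ i, a < i → i < b → ¬ P i := by
  have hcb' : c ≤ b - 1 := Nat.le_sub_one_of_lt hcb
  refine ⟨Nat.findGreatest P (b - 1), ?_, Nat.findGreatest_spec hcb' hc, fun i hai hib =>
    Nat.findGreatest_is_greatest hai (Nat.le_sub_one_of_lt hib)⟩
  have := Nat.findGreatest_le (P := P) (b - 1)
  omega

namespace Trail

section Skip

/-- The increasing enumeration of the indices that remain when the `s` indices following `a`
are deleted. -/
def skip (a s k : ℕ) : ℕ := if k ≤ a then k else k + s

variable {a s k : ℕ}

theorem skip_of_le (h : k ≤ a) : skip a s k = k := if_pos h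

theorem skip_of_lt (h : a < k) : skip a s k = k + s := if_neg h.not_ge

theorem skip_succ_self : skip a s (a + 1) = a + s + 1 := by
  rw [skip_of_lt a.lt_succ_self, Nat.add_right_comm]

theorem skip_injective (a s : ℕ) : Function.Injective (skip a s) := by
  intro i j h
  unfold skip at h
  split_ifs at h <;> omega

theorem le_skip : k ≤ skip a s k := by
  unfold skip
  split_ifs <;> omega

theorem skip_le_add : skip a s k ≤ k + s := by
  unfold skip
  split_ifs <;> omega

end Skip

section Shortcut

variable {V : Type*} {E : V → V → Prop} {T : Trail V E} {Z : Set V} {a s k : ℕ}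

theorem mem_convIdx : k ∈ T.convIdx ↔ T.ConvAt k := by
  rw [convIdx, Finset.mem_filter, Finset.mem_Ioo, and_iff_right_iff_imp]
  exact fun h => ⟨h.1, h.2.1⟩

/-- The trail obtained from `T` by deleting the `s` nodes following index `a`, when the nodes
on either side of the gap are adjacent. -/
@[simps]
def shortcut (T : Trail V E) (a s : ℕ) (hb : a + s + 1 ≤ T.len)
    (hadj : E (T.f a) (T.f (a + s + 1)) ∨ E (T.f (a + s + 1)) (T.f a)) : Trail V E where
  len := T.len - s
  f k := T.f (skip a s k)
  arcs k hk := by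
    rcases lt_trichotomy k a with hka | rfl | hka
    · rw [skip_of_le hka.le, skip_of_le hka]
      exact T.arcs k (by omega)
    · rwa [skip_of_le le_rfl, skip_succ_self]
    · rw [skip_of_lt hka, skip_of_lt (by omega), Nat.add_right_comm]
      exact T.arcs (k + s) (by omega)
  inj i hi j hj hij := by
    have skip_le_len {k : ℕ} (hk : k ≤ T.len - s) : skip a s k ≤ T.len :=
      skip_le_add.trans (by omega)
    exact skip_injective a s (T.inj _ (skip_le_len hi) _ (skip_le_len hj) hij)

section Adjacent

variable {hb : a + s + 1 ≤ T.len}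
  {hadj : E (T.f a) (T.f (a + s + 1)) ∨ E (T.f (a + s + 1)) (T.f a)}

theorem shortcut_f_zero : (T.shortcut a s hb hadj).f 0 = T.f 0 := by
  rw [shortcut_f, skip_of_le a.zero_le]

theorem shortcut_f_len : (T.shortcut a s hb hadj).f (T.shortcut a s hb hadj).len = T.f T.len := by
  rw [shortcut_f, shortcut_len, skip_of_lt (by omega), Nat.sub_add_cancel (by omega)]

theorem convAt_shortcut_of_lt (hk : k < a) :
    (T.shortcut a s hb hadj).ConvAt k ↔ T.ConvAt k := by
  have hlen : k < T.len - s ↔ k < T.len := by omega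
  simp only [ConvAt, shortcut_len, shortcut_f, hlen, skip_of_le hk.le,
    skip_of_le (show k + 1 ≤ a from hk), skip_of_le (show k - 1 ≤ a by omega)]

theorem convAt_shortcut_of_gt (hk : a + 1 < k) :
    (T.shortcut a s hb hadj).ConvAt k ↔ T.ConvAt (k + s) := by
  have hpos : 0 < k ↔ 0 < k + s := by omega
  have hlen : k < T.len - s ↔ k + s < T.len := by omega
  simp only [ConvAt, shortcut_len, shortcut_f, hpos, hlen, skip_of_lt (show a < k by omega),
    skip_of_lt (show a < k + 1 by omega), skip_of_lt (show a < k - 1 by omega),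
    show k - 1 + s = k + s - 1 by omega, Nat.add_right_comm k 1 s]

end Adjacent

variable {hb : a + s + 1 ≤ T.len} (harc : E (T.f (a + s + 1)) (T.f a))

theorem ConvAt.shortcut (ha : T.ConvAt a) : (T.shortcut a s hb (.inr harc)).ConvAt a := by
  refine ⟨ha.1, show a < T.len - s by omega, ?_⟩
  rw [shortcut_f, shortcut_f, shortcut_f, skip_of_le le_rfl, skip_of_le (a.sub_le 1),
    skip_succ_self]
  exact ⟨ha.2.2.1, harc⟩

variable [Std.Asymm E]

theorem not_convAt_shortcut_succ : ¬ (T.shortcut a s hb (.inr harc)).ConvAt (a + 1) := by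
  rintro ⟨-, -, h, -⟩
  rw [shortcut_f, shortcut_f, Nat.add_sub_cancel, skip_of_le le_rfl, skip_succ_self] at h
  exact Std.Asymm.asymm _ _ harc h

theorem convAt_shortcut_iff (ha : T.ConvAt a) :
    (T.shortcut a s hb (.inr harc)).ConvAt k ↔ k ≠ a + 1 ∧ T.ConvAt (skip a s k) := by
  rcases lt_trichotomy k a with hka | rfl | hka
  · rw [convAt_shortcut_of_lt hka, skip_of_le hka.le, and_iff_right (by omega)]
  · rw [skip_of_le le_rfl]
    exact iff_of_true (ha.shortcut harc) ⟨k.lt_succ_self.ne, ha⟩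
  · rcases (Nat.succ_le_of_lt hka).eq_or_lt with rfl | hak
    · exact iff_of_false (not_convAt_shortcut_succ harc) fun h => h.1 rfl
    · rw [convAt_shortcut_of_gt hak, skip_of_lt hka, and_iff_right hak.ne']

theorem ActivatedBy.shortcut (hT : T.ActivatedBy Z) (ha : T.ConvAt a)
    (hbZ : T.f (a + s + 1) ∉ Z) : (T.shortcut a s hb (.inr harc)).ActivatedBy Z := by
  intro k hk0 hk
  rw [shortcut_len] at hk
  obtain ⟨hconv, hnconv⟩ :=
    hT (skip a s k) (hk0.trans_le le_skip) (skip_le_add.trans_lt (by omega))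
  rw [convAt_shortcut_iff harc ha, shortcut_f]
  refine ⟨fun h => hconv h.2, fun h => ?_⟩
  rcases eq_or_ne k (a + 1) with rfl | hka
  · rwa [skip_succ_self]
  · exact hnconv fun hc => h ⟨hka, hc⟩

theorem weight_fst_shortcut_lt (ha : T.ConvAt a) (hbc : T.ConvAt (a + s + 1))
    (hbZ : T.f (a + s + 1) ∉ Z) :
    ((T.shortcut a s hb (.inr harc)).weight Z).1 < (T.weight Z).1 := by
  set S := T.shortcut a s hb (.inr harc)
  let outside := T.convIdx.filter fun i => T.f i ∉ Z
  have maps : Set.MapsTo (skip a s) (S.convIdx.filter fun i => S.f i ∉ Z)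
      (outside.erase (a + s + 1)) := by
    intro k hk
    obtain ⟨hk, hkZ⟩ := Finset.mem_filter.1 hk
    obtain ⟨hka, hkc⟩ := (convAt_shortcut_iff harc ha).1 (mem_convIdx.1 hk)
    exact Finset.mem_erase.2 ⟨skip_succ_self ▸ (skip_injective a s).ne hka,
      Finset.mem_filter.2 ⟨mem_convIdx.2 hkc, hkZ⟩⟩
  calc (S.weight Z).1
    _ ≤ (outside.erase (a + s + 1)).card :=
      Finset.card_le_card_of_injOn _ maps (skip_injective a s).injOn
    _ < outside.card :=
      Finset.card_erase_lt_of_mem (Finset.mem_filter.2 ⟨mem_convIdx.2 hbc, hbZ⟩)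

end Shortcut

end Trail

section Minimal

variable {V : Type*} {E : V → V → Prop} [Std.Asymm E] {X Y Z : Set V} {T : Trail V E}

theorem InTRAILS.mem_of_convAt_of_arc (hT : InTRAILS T X Y Z)
    (hmin : ∀ T' : Trail V E, InTRAILS T' X Y Z → (T.weight Z).1 ≤ (T'.weight Z).1) {a b : ℕ}
    (ha : T.ConvAt a) (hb : T.ConvAt b) (hab : a < b) (harc : E (T.f b) (T.f a)) :
    T.f b ∈ Z := by
  by_contra hbZ
  obtain ⟨s, rfl⟩ := Nat.exists_eq_add_of_lt hab
  obtain ⟨hX, hY, hact⟩ := hT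
  refine (hmin (T.shortcut a s hb.2.1.le (.inr harc)) ⟨?_, ?_, hact.shortcut harc ha hbZ⟩).not_gt
    (Trail.weight_fst_shortcut_lt harc ha hb hbZ)
  · rwa [Trail.shortcut_f_zero]
  · rwa [Trail.shortcut_f_len]

theorem minimal_trail_backward_chain_all_in_Z_general (hT : InTRAILS T X Y Z)
    (hmin : ∀ T' : Trail V E, InTRAILS T' X Y Z → (T.weight Z).1 ≤ (T'.weight Z).1)
    {c1 : ℕ} (hc1 : T.ConvAt c1) (hc1min : ∀ i, T.ConvAt i → c1 ≤ i) (hc1Z : T.f c1 ∈ Z)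
    (harc : ∀ a b, T.ConvAt a → T.ConvAt b → a < b →
      (∀ i, a < i → i < b → ¬ T.ConvAt i) → E (T.f b) (T.f a)) :
    ∀ i, T.ConvAt i → T.f i ∈ Z := by
  intro b hb
  rcases (hc1min b hb).eq_or_lt with rfl | hlt
  · exact hc1Z
  · obtain ⟨a, hab, ha, hconsec⟩ := exists_last_lt hc1 hlt
    exact hT.mem_of_convAt_of_arc hmin ha hb hab (harc a b ha hb hab hconsec)

end Minimal

/-- If `Y ∪ Z` has local relationships, the first converging node `c₁`
of a minimal trail of `TRAILS(X,Y,Z)` is in `Z`, and every consecutive pair of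
converging nodes satisfies `cᵢ₊₁ → cᵢ ∈ E`, then every converging node belongs to `Z`. -/
theorem minimal_trail_backward_chain_all_in_Z
    {V : Type*} [Fintype V] (E : V → V → Prop) (hdag : IsDAG E)
    (hnac : ¬ HasActiveCycle E) (X Y Z : Set V)
    (hXY : Disjoint X Y) (hXZ : Disjoint X Z) (hYZ : Disjoint Y Z)
    (hne : ∃ T₀ : Trail V E, InTRAILS T₀ X Y Z)
    (T : Trail V E) (hT : MinimalTrail T X Y Z)
    (hlocal : LocalRel E (Y ∪ Z))
    (c1 : ℕ) (hc1 : T.ConvAt c1) (hc1min : ∀ i, T.ConvAt i → c1 ≤ i)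
    (hc1Z : T.f c1 ∈ Z)
    (harc : ∀ a b, T.ConvAt a → T.ConvAt b → a < b →
      (∀ i, a < i → i < b → ¬ T.ConvAt i) → E (T.f b) (T.f a)) :
    ∀ i, T.ConvAt i → T.f i ∈ Z := by
  have := hdag.asymm
  exact minimal_trail_backward_chain_all_in_Z_general hT.1
    (fun T' hT' => not_lt.1 fun hlt => hT.2 T' hT' (.inl hlt)) hc1 hc1min hc1Z harc
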